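/- Let T be a complete geometric theory and let (M, H(M)) be an expansion of a model M ⊨ T satisfying the density property and the extension property. Then whenever A ⊆ M has finite dimension and p(x_1,…,x_n) ∈ S_n(A) is an L-type of dimension n, p has a realization in H(M)^n and a realization in (M \ acl_L(A ∪ H(M)))^n; furthermore one can choose a realization b̄ ∈ (M \ acl_L(A ∪ H(M)))^n of p with dim(b̄ / acl_L(A ∪ H(M))) = n. -/

import Mathlib

open FirstOrder

namespace HPaper

universe u v w

variable {M : Type w} (L : FirstOrder.Language.{u, v}) [L.Structure M]


/-- `x` is (model-theoretically) algebraic over the parameter set `A`: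
it satisfies a formula with parameters in `A` having finitely many solutions. -/
def acl (A : Set M) : Set M :=
  {x : M | ∃ φ : (L.withConstants A).Formula (Fin 1),
      {y : M | φ.Realize (fun _ => y)}.Finite ∧ φ.Realize (fun _ => x)}

/-- Two tuples have the same `L`-type over the parameter set `A`. -/
def SameType (A : Set M) {α : Type*} (a b : α → M) : Prop :=
  ∀ φ : (L.withConstants A).Formula α, φ.Realize a ↔ φ.Realize b

/-- The (algebraic-closure) dimension of a finite tuple over a base set: the least
cardinality of a subtuple over which (together with the base) the whole tuple is algebraic. -/
noncomputable def dim {α : Type*} [Fintype α] (a : α → M) (B : Set M) : ℕ :=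
  sInf {k : ℕ | ∃ s : Finset α, s.card = k ∧ ∀ i, a i ∈ acl L (B ∪ (a '' ↑s))}

/-- The tuple `a` is algebraically independent from `C` over `B`. -/
def Indep {α : Type*} [Fintype α] (a : α → M) (B C : Set M) : Prop :=
  dim L a (B ∪ C) = dim L a B

/-- The set `A` is algebraically independent from `C` over `B`. -/
def SetIndep (A B C : Set M) : Prop :=
  ∀ (n : ℕ) (a : Fin n → M), (∀ i, a i ∈ A) → Indep L a B C

/-- `A` is `H`-independent: `A` is independent from `H` over `A ∩ H`. -/
def HIndepSet (H A : Set M) : Prop :=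
  SetIndep L A (A ∩ H) H

/-- A tuple is `H`-independent. -/
def HIndepTuple (H : Set M) {α : Type*} [Fintype α] (a : α → M) : Prop :=
  Indep L a (Set.range a ∩ H) H

/-- `A` has finite dimension. -/
def FinDim (A : Set M) : Prop :=
  ∃ s : Finset M, A ⊆ acl L ↑s

/-- The exchange property for algebraic closure. -/
def Exchange (L' : FirstOrder.Language.{u, v}) (N : Type w) [L'.Structure N] : Prop :=
  ∀ (A : Set N) (a b : N), a ∈ acl L' (A ∪ {b}) → a ∉ acl L' A → b ∈ acl L' (A ∪ {a})

/-- Uniform elimination of the quantifier `∃^∞` in the structure `N`. -/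
def ElimInfty (L' : FirstOrder.Language.{u, v}) (N : Type w) [L'.Structure N] : Prop :=
  ∀ (q : ℕ) (φ : L'.Formula (Fin 1 ⊕ Fin q)), ∃ Nb : ℕ, ∀ v : Fin q → N,
    {x : N | φ.Realize (Sum.elim (fun _ => x) v)}.Finite →
      {x : N | φ.Realize (Sum.elim (fun _ => x) v)}.ncard ≤ Nb

/-- `N` is a geometric structure: acl satisfies exchange and `∃^∞` is eliminated. -/
def Geometric (L' : FirstOrder.Language.{u, v}) (N : Type w) [L'.Structure N] : Prop :=
  Exchange L' N ∧ ElimInfty L' N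

/-- The density property of the pair `(M, H)`. -/
def DensityProp (H : Set M) : Prop :=
  ∀ A : Set M, FinDim L A → ∀ a : M, a ∉ acl L A →
    ∃ h ∈ H, SameType L A (fun _ : Fin 1 => a) (fun _ => h)

/-- The extension property of the pair `(M, H)`. -/
def ExtensionProp (H : Set M) : Prop :=
  ∀ A : Set M, FinDim L A → ∀ a : M, a ∉ acl L A →
    ∃ b : M, b ∉ acl L (A ∪ H) ∧ SameType L A (fun _ : Fin 1 => a) (fun _ => b)

/-- `H` is an algebraically independent set. -/
def AclIndepSet (H : Set M) : Prop :=
  ∀ h ∈ H, h ∉ acl L (H \ {h})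

/-- `(M, H)` is an `H`-structure. -/
def IsHStructure (H : Set M) : Prop :=
  DensityProp L H ∧ ExtensionProp L H ∧ AclIndepSet L H

/-- `h` enumerates an `H`-basis of the tuple `a` over the set `A`: a minimal-length tuple of
distinct elements of `H` such that `a⌢h` is independent from `H` over `A`. -/
def IsHBasis (H : Set M) (A : Set M) {α : Type*} [Fintype α] {k : ℕ}
    (a : α → M) (h : Fin k → M) : Prop :=
  (∀ i, h i ∈ H) ∧ Function.Injective h ∧ Indep L (Sum.elim a h) A H ∧
    ∀ (k' : ℕ) (h' : Fin k' → M), (∀ i, h' i ∈ H) → Indep L (Sum.elim a h') A H → k ≤ k'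

/-- Countable saturation (a rendering of "sufficiently saturated", adequate for
the countably-many-parameters arguments in the paper). -/
def CountSaturated (L' : FirstOrder.Language.{u, v}) (N : Type w) [L'.Structure N] : Prop :=
  ∀ (A : Set N), A.Countable → ∀ (n : ℕ)
    (S : Set ((L'.withConstants A).Formula (Fin n))),
    (∀ F : Finset ((L'.withConstants A).Formula (Fin n)), ↑F ⊆ S →
      ∃ a : Fin n → N, ∀ φ ∈ F, φ.Realize a) →
    ∃ a : Fin n → N, ∀ φ ∈ S, φ.Realize a

/-- The theory of `M` is nowhere trivial. -/
def NowhereTrivial (L' : FirstOrder.Language.{u, v}) (N : Type w) [L'.Structure N] : Prop :=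
  ∀ (A : Set N), A.Countable → ∀ a : N, a ∉ acl L' A →
    ∃ (m k : ℕ) (b : Fin m → N) (c : Fin k → N),
      Indep L' (fun _ : Fin 1 => a) A (Set.range b) ∧
      Indep L' (fun _ : Fin 1 => a) A (Set.range c) ∧
      a ∈ acl L' ((A ∪ Set.range b) ∪ Set.range c)



/-- The formula `φ(x̄, b̄)` divides over `A`: there is an `A`-indiscernible sequence of
tuples, each with the same type as `b̄` over `A`, along which the instances of `φ` are
`k`-inconsistent. -/
def FormulaDivides {α : Type*} {m : ℕ} (φ : L.Formula (α ⊕ Fin m))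
    (b : Fin m → M) (A : Set M) : Prop :=
  ∃ (bs : ℕ → Fin m → M) (k : ℕ), 0 < k ∧
    (∀ i, SameType L A (bs i) b) ∧
    (∀ (l : ℕ) (f g : Fin l → ℕ), StrictMono f → StrictMono g →
      SameType L A (fun p : Fin l × Fin m => bs (f p.1) p.2)
        (fun p : Fin l × Fin m => bs (g p.1) p.2)) ∧
    (∀ s : Finset ℕ, s.card = k → ¬ ∃ x : α → M, ∀ i ∈ s, φ.Realize (Sum.elim x (bs i)))

/-- The formula `φ(x̄, b̄)` forks over `A`: it implies a finite disjunction of formulas,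
each of which divides over `A`. -/
def FormulaForks {α : Type*} {m : ℕ} (φ : L.Formula (α ⊕ Fin m))
    (b : Fin m → M) (A : Set M) : Prop :=
  ∃ (N : ℕ) (m' : Fin N → ℕ) (ψ : ∀ j, L.Formula (α ⊕ Fin (m' j)))
    (c : ∀ j, Fin (m' j) → M),
    (∀ j, FormulaDivides L (ψ j) (c j) A) ∧
    ∀ x : α → M, φ.Realize (Sum.elim x b) → ∃ j, (ψ j).Realize (Sum.elim x (c j))

/-- The type of `ā` over `B` forks over `A`. -/
def TypeForks {α : Type*} (a : α → M) (B A : Set M) : Prop :=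
  ∃ (m : ℕ) (φ : L.Formula (α ⊕ Fin m)) (b : Fin m → M),
    (∀ i, b i ∈ B) ∧ φ.Realize (Sum.elim a b) ∧ FormulaForks L φ b A

/-- `SUge L a A α` : the `SU`-rank of `tp(ā/A)` is at least `α`. -/
noncomputable def SUge {α' : Type*} (a : α' → M) (o : Ordinal.{0}) (A : Set M) : Prop :=
  Ordinal.lt_wf.fix (C := fun _ => Set M → Prop)
    (fun o ih A => ∀ β (h : β < o), ∃ B : Set M, A ⊆ B ∧ TypeForks L a B A ∧ ih β h B) o A

/-- The `SU`-rank of `tp(ā/A)`, as an ordinal (assuming it is ordinal-valued). -/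
noncomputable def SU {α' : Type*} (a : α' → M) (A : Set M) : Ordinal.{0} :=
  sSup {o : Ordinal | SUge L a o A}

/-- `T` has `SU`-rank one: every non-algebraic `1`-type has `SU`-rank `1`. -/
def SURankOne (L' : FirstOrder.Language.{u, v}) (N : Type w) [L'.Structure N] : Prop :=
  (∀ (a : N) (A : Set N), a ∈ acl L' A → SU L' (fun _ : Fin 1 => a) A = 0) ∧
  (∀ (a : N) (A : Set N), a ∉ acl L' A → SU L' (fun _ : Fin 1 => a) A = 1)

/-- The `SU`-rank of the (type-)definable set `X` over `A` equals `o` (and is attained). -/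
def SUSetEq {α' : Type*} (X : Set (α' → M)) (A : Set M) (o : Ordinal.{0}) : Prop :=
  (∀ a ∈ X, SU L a A ≤ o) ∧ ∃ a ∈ X, SU L a A = o

/-- The `SU`-rank of the set `X` over `A` is (strictly) less than `o`. -/
def SUSetLt {α' : Type*} (X : Set (α' → M)) (A : Set M) (o : Ordinal.{0}) : Prop :=
  ∀ a ∈ X, SU L a A < o

/-- Shorthand for the ordinal `ω·n + k`. -/
noncomputable def wnk (n k : ℕ) : Ordinal.{0} :=
  Ordinal.omega0 * (n : Ordinal) + (k : Ordinal)



/-- The language consisting of a single unary predicate. -/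
def unaryLang : FirstOrder.Language.{0, 0} :=
  ⟨fun _ => Empty, fun n => match n with | 1 => PUnit | _ => Empty⟩

/-- Interpret the unary predicate of `unaryLang` as membership in `H`. -/
def unaryStructure (H : Set M) : unaryLang.Structure M where
  funMap := fun {_} f _ => Empty.elim f
  RelMap := fun {n} r v =>
    match n, r, v with
    | 1, _, v => v 0 ∈ H
    | 0, r, _ => Empty.elim r
    | (_ + 2), r, _ => Empty.elim r

/-- The language `L_H = L ∪ {H}`. -/
def LH (L : FirstOrder.Language.{u, v}) : FirstOrder.Language :=
  L.sum unaryLang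

/-- The `L_H`-structure on `M` induced by the `L`-structure and the set `H`. -/
def hStructure (H : Set M) : (LH L).Structure M :=
  letI : unaryLang.Structure M := unaryStructure H
  inferInstanceAs ((L.sum unaryLang).Structure M)

/-- Realization of `L_H`-formulas in `(M, H)`. -/
def RealizeH (H : Set M) {α : Type*} (φ : (LH L).Formula α) (v : α → M) : Prop :=
  letI := hStructure L H
  φ.Realize v

/-- `L_H`-definability over a parameter set, in `(M, H)`. -/
def DefinableH (H : Set M) {α : Type*} (A : Set M) (s : Set (α → M)) : Prop :=
  letI := hStructure L H
  Set.Definable A (LH L) s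

/-- `acl` in the sense of `L_H` in `(M, H)`. -/
noncomputable def aclH (H : Set M) (A : Set M) : Set M :=
  letI := hStructure L H
  acl (LH L) A

/-- Equality of `L_H`-types over a parameter set, in `(M, H)`. -/
def SameTypeH (H : Set M) (A : Set M) {α : Type*} (a b : α → M) : Prop :=
  letI := hStructure L H
  SameType (LH L) A a b


/-- `SU`-rank in the sense of `L_H`, computed in `(M, H)`. -/
noncomputable def SUH (H : Set M) {α' : Type*} (a : α' → M) (A : Set M) : Ordinal.{0} :=
  letI := hStructure L H
  SU (LH L) a A

/-- `SUge` in the sense of `L_H`, computed in `(M, H)`. -/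
noncomputable def SUgeH (H : Set M) {α' : Type*} (a : α' → M) (o : Ordinal.{0})
    (A : Set M) : Prop :=
  letI := hStructure L H
  SUge (LH L) a o A

/-- The `L_H`-`SU`-rank of the set `X` over `A` equals `o` (and is attained). -/
def SUSetEqH (H : Set M) {α' : Type*} (X : Set (α' → M)) (A : Set M)
    (o : Ordinal.{0}) : Prop :=
  letI := hStructure L H
  SUSetEq (LH L) X A o

/-- The `L_H`-`SU`-rank of the set `X` over `A` is less than `o`. -/
def SUSetLtH (H : Set M) {α' : Type*} (X : Set (α' → M)) (A : Set M)
    (o : Ordinal.{0}) : Prop :=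
  letI := hStructure L H
  SUSetLt (LH L) X A o


/-- `(M, H)` is countably saturated as an `L_H`-structure. -/
def CountSaturatedH (H : Set M) : Prop :=
  letI := hStructure L H
  CountSaturated (LH L) M


/-!
Types over `A` are represented by realizations, so the two one-variable properties can be applied
to a tuple in place: replacing one coordinate by a realization of its type over `A` and the other
coordinates preserves the type of the tuple over `A`. That the tuple is algebraically independent
over `A` is part of its type, so after each replacement the next coordinate is still non-algebraic
over the others, and the properties apply again. By exchange, new coordinates chosen outside the
algebraic closure of `A`, `H` and the other coordinates form an independent tuple over `A ∪ H`.

That independence is part of the type, and that `acl` is transitive, both come from one fact: an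
element algebraic over parameters `c` lies in the fiber over `c` of a definable relation all of
whose fibers are finite.
-/

section

variable {L} {A B C H : Set M} {α β : Type*}

theorem definable₁_setOf_const_mem_iff {S : Set (Fin 1 → M)} :
    A.Definable₁ L {y | (fun _ => y) ∈ S} ↔ A.Definable L S := by
  have hconst (v : Fin 1 → M) : (fun _ => v 0) = v :=
    funext fun i => congrArg v (Subsingleton.elim 0 i)
  simp only [Set.Definable₁, Set.mem_ofPred_eq, hconst, Set.ofPred_mem_eq]

theorem mem_acl_iff {x : M} :
    x ∈ acl L A ↔ ∃ S : Set M, S.Finite ∧ A.Definable₁ L S ∧ x ∈ S := by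
  constructor
  · rintro ⟨φ, hfin, hx⟩
    exact ⟨_, hfin, definable₁_setOf_const_mem_iff.2 ⟨φ, rfl⟩, hx⟩
  · rintro ⟨S, hfin, ⟨φ, hφ⟩, hx⟩
    have hS : S = {y | φ.Realize fun _ => y} := Set.ext fun y => Set.ext_iff.1 hφ fun _ => y
    exact ⟨φ, hS ▸ hfin, hS.subset hx⟩

theorem subset_acl (A : Set M) : A ⊆ acl L A := fun x hx =>
  mem_acl_iff.2 ⟨{x}, Set.finite_singleton x, Set.Definable.singleton_of_mem L hx, rfl⟩

theorem acl_mono (h : A ⊆ B) : acl L A ⊆ acl L B := fun _ hx =>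
  let ⟨S, hfin, hS, hxS⟩ := mem_acl_iff.1 hx
  mem_acl_iff.2 ⟨S, hfin, Set.Definable.mono hS h, hxS⟩

theorem definable_union_range_iff [Finite α] [Finite β] {c : β → M} {s : Set (α → M)} :
    (B ∪ Set.range c).Definable L s ↔
      ∃ R : Set (α ⊕ β → M), B.Definable L R ∧ s = {v | Sum.elim v c ∈ R} := by
  constructor
  · intro hs
    obtain ⟨φ, rfl⟩ := Set.definable_iff_exists_formula_sum.1 hs
    have exists_term (p : ↥(B ∪ Set.range c)) :
        ∃ t : (L.withConstants B).Term (α ⊕ β), ∀ v : α → M, t.realize (Sum.elim v c) = p := by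
      obtain ⟨_, hb | ⟨j, rfl⟩⟩ := p
      · exact ⟨(L.con (⟨_, hb⟩ : B)).term, fun _ => by simp⟩
      · exact ⟨Language.Term.var (Sum.inr j), fun _ => by simp⟩
    choose t ht using exists_term
    let σ : ↥(B ∪ Set.range c) ⊕ α → (L.withConstants B).Term (α ⊕ β) :=
      Sum.elim t fun i => Language.Term.var (Sum.inl i)
    have hσ (v : α → M) : (fun i => (σ i).realize (Sum.elim v c)) = Sum.elim (↑) v :=
      funext fun i => by cases i <;> simp [σ, ht]
    refine ⟨_, ⟨((L.lhomWithConstants B).onFormula φ).subst σ, rfl⟩, Set.ext fun v => ?_⟩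
    change φ.Realize _ ↔ Language.BoundedFormula.Realize (Language.BoundedFormula.subst _ σ) _ _
    rw [Language.BoundedFormula.realize_subst, hσ]
    exact (Language.LHom.realize_onFormula _ φ).symm
  · rintro ⟨R, hR, rfl⟩
    refine (hR.mono Set.subset_union_left).preimage_map (F := fun v => Sum.elim v c) ?_
    rintro (i | j)
    · exact Set.DefinableFun.proj L
    · exact L.definableFun_const α (Or.inr ⟨j, rfl⟩)

/-- The fiber over the parameters `u` of a relation `R` between elements and parameter tuples;
finite fibers of definable relations witness algebraicity. The element variable is indexed by
`Fin 1`, as in the formulas defining `acl`. -/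
def fiber (R : Set (Fin 1 ⊕ β → M)) (u : β → M) : Set M :=
  {y | Sum.elim (fun _ => y) u ∈ R}

theorem definable_setOf_fiber_subset_range [Finite β] {R : Set (Fin 1 ⊕ β → M)}
    (hR : B.Definable L R) (k : ℕ) :
    B.Definable L {u | ∃ w : Fin k → M, fiber R u ⊆ Set.range w} := by
  have hbody : B.Definable L ({f : (β ⊕ Fin k) ⊕ Fin 1 → M |
      f ∘ Sum.elim Sum.inr (Sum.inl ∘ Sum.inl) ∈ R}ᶜ ∪
      ⋃ j : Fin k, {f | f (Sum.inl (Sum.inr j)) = f (Sum.inr 0)}) :=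
    (hR.preimage_comp _).compl.union <| Set.definable_iUnion_of_finite fun j =>
      Set.DefinableFun.ofPred_eq (Set.DefinableFun.proj L) (Set.DefinableFun.proj L)
  convert! hbody.forall_of_finite.exists_of_finite using 1
  ext u
  simp only [fiber, Set.subset_def, Set.mem_range, Set.mem_ofPred_eq, Set.mem_union,
    Set.mem_compl_iff, Set.mem_iUnion, Sum.elim_inr, Sum.elim_inl, ← imp_iff_not_or,
    Sum.comp_elim, ← Function.comp_assoc, Sum.elim_comp_inr, Sum.elim_comp_inl]
  exact exists_congr fun w => (Equiv.funUnique (Fin 1) M).symm.forall_congr fun {_} => Iff.rfl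

theorem mem_acl_union_range_iff [Finite β] {c : β → M} {x : M} :
    x ∈ acl L (B ∪ Set.range c) ↔ ∃ R : Set (Fin 1 ⊕ β → M),
      B.Definable L R ∧ (∀ u, (fiber R u).Finite) ∧ x ∈ fiber R c := by
  constructor
  · intro hx
    obtain ⟨S, hfin, hS, hxS⟩ := mem_acl_iff.1 hx
    obtain ⟨R, hR, hSR⟩ := definable_union_range_iff.1 hS
    have hS_fiber : S = fiber R c := Set.ext fun y => Set.ext_iff.1 hSR fun _ => y
    obtain ⟨k, w, -, hw⟩ := hfin.fin_param
    refine ⟨R ∩ {f | ∃ w : Fin k → M, fiber R (f ∘ Sum.inr) ⊆ Set.range w},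
      hR.inter ((definable_setOf_fiber_subset_range hR k).preimage_comp Sum.inr), fun u => ?_,
      hS_fiber.subset hxS, w, (hS_fiber.symm.trans hw.symm).subset⟩
    by_cases hu : ∃ w : Fin k → M, fiber R u ⊆ Set.range w
    · obtain ⟨w, hw⟩ := hu
      exact (Set.finite_range w).subset fun y hy => hw hy.1
    · exact Set.finite_empty.subset fun y hy => hu hy.2
  · rintro ⟨R, hR, hfin, hx⟩
    exact mem_acl_iff.2 ⟨fiber R c, hfin c,
      definable₁_setOf_const_mem_iff.2 (definable_union_range_iff.2 ⟨R, hR, rfl⟩), hx⟩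

theorem acl_union_range_subset [Finite β] {c : β → M} (hc : ∀ j, c j ∈ acl L B) :
    acl L (B ∪ Set.range c) ⊆ acl L B := by
  intro x hx
  obtain ⟨R, hR, hR_fin, hxR⟩ := mem_acl_union_range_iff.1 hx
  choose Y hY_fin hY hcY using fun j => mem_acl_iff.1 (hc j)
  have hdef : B.Definable L (R ∩ ⋂ j, {f | f (Sum.inr j) ∈ Y j}) :=
    hR.inter <| Set.definable_iInter_of_finite fun j => (hY j).preimage_comp fun _ => Sum.inr j
  refine mem_acl_iff.2 ⟨{y | ∃ u, y ∈ fiber R u ∧ ∀ j, u j ∈ Y j}, ?_, ?_, c, hxR, hcY⟩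
  · refine ((Set.Finite.pi' hY_fin).biUnion fun u _ => hR_fin u).subset ?_
    rintro y ⟨u, hyu, hu⟩
    exact Set.mem_biUnion hu hyu
  · refine definable₁_setOf_const_mem_iff
      (S := {v | ∃ u : β → M, Sum.elim v u ∈ R ∧ ∀ j, u j ∈ Y j}).2 ?_
    simpa using hdef.exists_of_finite

theorem acl_subset_acl (h : C ⊆ acl L B) : acl L C ⊆ acl L B := by
  intro x hx
  obtain ⟨S, hfin, hS, hxS⟩ := mem_acl_iff.1 hx
  obtain ⟨C₀, hC₀, hS₀⟩ := Set.definable_iff_finitely_definable.1 hS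
  refine acl_union_range_subset (c := ((↑) : C₀ → M)) (fun j => h (hC₀ j.2)) ?_
  exact acl_mono (by simp) (mem_acl_iff.2 ⟨S, hfin, hS₀, hxS⟩)

theorem acl_acl_union (B C : Set M) : acl L (acl L B ∪ C) = acl L (B ∪ C) := by
  refine (acl_subset_acl (Set.union_subset (acl_mono Set.subset_union_left) ?_)).antisymm
    (acl_mono (Set.union_subset_union_left C (subset_acl B)))
  exact Set.subset_union_right.trans (subset_acl _)

theorem dim_acl [Fintype α] (a : α → M) (B : Set M) : dim L a (acl L B) = dim L a B := by
  simp only [dim, acl_acl_union]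

theorem FinDim.union_finite (hA : FinDim L A) (hB : B.Finite) : FinDim L (A ∪ B) := by
  classical
  obtain ⟨s, hs⟩ := hA
  refine ⟨s ∪ hB.toFinset, Set.union_subset (hs.trans (acl_mono (by simp))) ?_⟩
  exact (by simp : B ⊆ ↑(s ∪ hB.toFinset)).trans (subset_acl _)

namespace SameType

variable {a b c : α → M}

theorem refl (A : Set M) (a : α → M) : SameType L A a a :=
  fun _ => Iff.rfl

theorem symm (h : SameType L A a b) : SameType L A b a :=
  fun φ => (h φ).symm

theorem trans (h : SameType L A a b) (h' : SameType L A b c) : SameType L A a c :=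
  fun φ => (h φ).trans (h' φ)

theorem mem_iff (h : SameType L A a b) {s : Set (α → M)} (hs : A.Definable L s) :
    a ∈ s ↔ b ∈ s := by
  obtain ⟨φ, rfl⟩ := hs
  exact h φ

theorem mem_acl [Finite α] (h : SameType L A a b) {i : α} {S : Set α}
    (hi : a i ∈ acl L (A ∪ a '' S)) : b i ∈ acl L (A ∪ b '' S) := by
  rw [← Set.range_domRestrict] at hi ⊢
  obtain ⟨R, hR, hfin, ha⟩ := mem_acl_union_range_iff.1 hi
  refine mem_acl_union_range_iff.2 ⟨R, hR, hfin, ?_⟩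
  have htype := h.mem_iff (hR.preimage_comp (Sum.elim (fun _ => i) (Subtype.val : S → α)))
  simp only [Set.mem_preimage, Sum.comp_elim] at htype
  exact htype.1 ha

theorem update [Finite α] [DecidableEq α] {k : α} {x : M}
    (h : SameType L (A ∪ c '' {k}ᶜ) (fun _ : Fin 1 => c k) fun _ => x) :
    SameType L A c (Function.update c k x) := by
  intro φ
  have hmap : (A ∪ c '' {k}ᶜ).DefinableMap L
      fun v : Fin 1 → M => Function.update c k (v 0) := by
    intro i
    by_cases hi : i = k
    · subst hi
      simpa using Set.DefinableFun.proj (A := A ∪ c '' {i}ᶜ) (i := (0 : Fin 1)) L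
    · have hci : c i ∈ A ∪ c '' {k}ᶜ := Or.inr ⟨i, hi, rfl⟩
      simpa [hi] using L.definableFun_const (Fin 1) hci
  have hφ : A.Definable L {v | φ.Realize v} := ⟨φ, rfl⟩
  simpa using! h.mem_iff ((hφ.mono Set.subset_union_left).preimage_map hmap)

end SameType

variable (L) in
/-- The subtuple of `c` indexed by `S` is algebraically independent over `B`. The indices matter:
a tuple that repeats an element on `S` is not independent. -/
def AclIndepOn (B : Set M) (c : α → M) (S : Set α) : Prop :=
  ∀ i ∈ S, c i ∉ acl L (B ∪ c '' (S \ {i}))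

namespace AclIndepOn

variable {a c d : α → M} {S : Set α}

theorem congr (hc : AclIndepOn L B c S) (h : Set.EqOn c d S) : AclIndepOn L B d S := by
  intro i hi
  rw [← h hi, ← (h.mono Set.sdiff_subset).image_eq]
  exact hc i hi

theorem insert (hex : Exchange L M) (hc : AclIndepOn L B c S) {k : α}
    (hk : c k ∉ acl L (B ∪ c '' S)) : AclIndepOn L B c (insert k S) := by
  have hkS : k ∉ S := fun h => hk (subset_acl _ (Or.inr ⟨k, h, rfl⟩))
  rintro i (rfl | hi) hmem
  · rw [Set.insert_sdiff_self_of_notMem hkS] at hmem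
    exact hk hmem
  · have hki : k ∉ ({i} : Set α) := fun h => hkS (h ▸ hi)
    rw [Set.insert_sdiff_of_notMem _ hki, Set.image_insert_eq, ← Set.union_singleton,
      ← Set.union_assoc] at hmem
    have hck := hex _ _ _ hmem (hc i hi)
    rw [Set.union_assoc, Set.union_singleton, ← Set.image_insert_eq,
      Set.insert_sdiff_self_of_mem hi] at hck
    exact hk hck

theorem of_sameType [Finite α] (hac : SameType L A a c) (ha : AclIndepOn L A a S) :
    AclIndepOn L A c S :=
  fun i hi hmem => ha i hi (hac.symm.mem_acl hmem)

theorem notMem_acl_compl (hc : AclIndepOn L B c Set.univ) (k : α) :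
    c k ∉ acl L (B ∪ c '' {k}ᶜ) := by
  simpa only [Set.compl_eq_univ_sdiff] using hc k trivial

end AclIndepOn

theorem dim_eq_card_iff [Fintype α] {c : α → M} :
    dim L c B = Fintype.card α ↔ AclIndepOn L B c Set.univ := by
  classical
  constructor
  · intro h i _ hmem
    have hle : dim L c B ≤ (Finset.univ.erase i).card := by
      refine Nat.sInf_le ⟨_, rfl, fun j => ?_⟩
      rw [Finset.coe_erase, Finset.coe_univ]
      by_cases hj : j = i
      · exact hj ▸ hmem
      · exact subset_acl _ (Or.inr ⟨j, ⟨trivial, hj⟩, rfl⟩)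
    exact (hle.trans_lt (Finset.card_erase_lt_of_mem (Finset.mem_univ i))).ne h
  · intro h
    refine IsLeast.csInf_eq ⟨⟨Finset.univ, rfl, fun i => ?_⟩, ?_⟩
    · exact subset_acl _ (Or.inr ⟨i, by simp, rfl⟩)
    · rintro _ ⟨s, rfl, hs⟩
      have hs_univ : s = Finset.univ := by
        refine Finset.eq_univ_of_forall fun i => by_contra fun hi => ?_
        refine h i trivial (acl_mono (Set.union_subset_union_right _ (Set.image_mono ?_)) (hs i))
        exact fun j hj => ⟨trivial, ne_of_mem_of_not_mem hj hi⟩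
      rw [hs_univ, Finset.card_univ]

theorem DensityProp.exists_sameType [Finite α] (hdens : DensityProp L H) (hA : FinDim L A)
    {a : α → M} (ha : AclIndepOn L A a Set.univ) :
    ∃ h : α → M, (∀ i, h i ∈ H) ∧ SameType L A a h := by
  classical
  cases nonempty_fintype α
  suffices replace_on : ∀ S : Finset α, ∃ h : α → M, (∀ i ∈ S, h i ∈ H) ∧ SameType L A a h by
    simpa using replace_on Finset.univ
  intro S
  induction S using Finset.induction_on with
  | empty => exact ⟨a, by simp, SameType.refl A a⟩
  | insert k S _ ih =>
    obtain ⟨c, hcH, hac⟩ := ih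
    obtain ⟨x, hxH, hx⟩ := hdens _ (hA.union_finite (Set.toFinite _)) _
      ((ha.of_sameType hac).notMem_acl_compl k)
    refine ⟨Function.update c k x, fun i hi => ?_, hac.trans hx.update⟩
    obtain rfl | hik := eq_or_ne i k
    · simpa using hxH
    · simpa [hik] using hcH i (Finset.mem_of_mem_insert_of_ne hi hik)

theorem ExtensionProp.exists_sameType (hex : Exchange L M) [Finite α]
    (hext : ExtensionProp L H) (hA : FinDim L A) {a : α → M}
    (ha : AclIndepOn L A a Set.univ) :
    ∃ b : α → M, AclIndepOn L (A ∪ H) b Set.univ ∧ SameType L A a b := by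
  classical
  cases nonempty_fintype α
  suffices replace_on : ∀ S : Finset α,
      ∃ b : α → M, AclIndepOn L (A ∪ H) b S ∧ SameType L A a b by
    simpa using replace_on Finset.univ
  intro S
  induction S using Finset.induction_on with
  | empty => exact ⟨a, by simp [AclIndepOn], SameType.refl A a⟩
  | insert k S hk ih =>
    obtain ⟨c, hc, hac⟩ := ih
    obtain ⟨x, hxH, hx⟩ := hext _ (hA.union_finite (Set.toFinite _)) _
      ((ha.of_sameType hac).notMem_acl_compl k)
    have hkS : (S : Set α) ⊆ {k}ᶜ := by simpa using hk
    have heqOn : Set.EqOn c (Function.update c k x) S := fun i hi =>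
      (Function.update_of_ne (hkS hi) x c).symm
    refine ⟨Function.update c k x, ?_, hac.trans hx.update⟩
    rw [Finset.coe_insert]
    refine (hc.congr heqOn).insert hex fun hmem => hxH ?_
    rw [Function.update_self, ← heqOn.image_eq, Set.union_right_comm] at hmem
    exact acl_mono (by gcongr) hmem

theorem statement0_general [Fintype α] (H : Set M) (hex : Exchange L M)
    (hdens : DensityProp L H) (hext : ExtensionProp L H) (A : Set M) (hA : FinDim L A)
    (a : α → M) (hdim : dim L a A = Fintype.card α) :
    (∃ h : α → M, (∀ i, h i ∈ H) ∧ SameType L A a h) ∧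
    (∃ b : α → M, (∀ i, b i ∉ acl L (A ∪ H)) ∧ SameType L A a b) ∧
    (∃ b : α → M, (∀ i, b i ∉ acl L (A ∪ H)) ∧ SameType L A a b ∧
      dim L b (acl L (A ∪ H)) = Fintype.card α) := by
  have ha : AclIndepOn L A a Set.univ := dim_eq_card_iff.1 hdim
  obtain ⟨b, hb, hab⟩ := hext.exists_sameType hex hA ha
  have hbH (i : α) : b i ∉ acl L (A ∪ H) := fun hi =>
    hb i trivial (acl_mono Set.subset_union_left hi)
  exact ⟨hdens.exists_sameType hA ha, ⟨b, hbH, hab⟩, b, hbH, hab,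
    (dim_acl b _).trans (dim_eq_card_iff.2 hb)⟩

end

/-- If `(M, H)` is a dense/codense expansion of a geometric structure,
`A` has finite dimension and `ā` realizes an `L`-type over `A` of dimension `n` (types over
`A` being represented by tuples realizing them), then the type of `ā` over `A` is realized
in `H^n`, is realized by a tuple of elements outside `acl_L(A ∪ H)`, and moreover such a
tuple can be chosen of full dimension `n` over `acl_L(A ∪ H)`. -/
theorem statement0 {M : Type w} (L : FirstOrder.Language.{u, v}) [L.Structure M]
    (H : Set M) (hgeom : Geometric L M)
    (hdens : DensityProp L H) (hext : ExtensionProp L H)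
    (A : Set M) (hA : FinDim L A)
    (n : ℕ) (a : Fin n → M) (hdim : dim L a A = n) :
    (∃ h : Fin n → M, (∀ i, h i ∈ H) ∧ SameType L A a h) ∧
    (∃ b : Fin n → M, (∀ i, b i ∉ acl L (A ∪ H)) ∧ SameType L A a b) ∧
    (∃ b : Fin n → M, (∀ i, b i ∉ acl L (A ∪ H)) ∧ SameType L A a b ∧
      dim L b (acl L (A ∪ H)) = n) := by
  simpa using statement0_general H hgeom.1 hdens hext A hA a (by simpa using hdim)

end HPaper
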